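/- Let (t, n, b) be a smooth right-handed orthonormal frame on an open set U ⊆ ℝ³ with Ω_n = n·(curl n) = 0 identically on U, let H be a smooth scalar function and v a smooth nowhere-zero vector field on U with v = n × ∇H and t = v/‖v‖. Then at every point of U: ∂_s ln‖v‖ = n·(curl b). -/

import Mathlib

/-!
Since `n` is a unit vector, `∇H = (n·∇H) n + (n × ∇H) × n = α n + λ b` with `α = n·∇H` and
`λ = ‖v‖`. Taking the `n`-component of `curl ∇H = 0` kills the `∇α × n` term and leaves
`α n·(curl n) + λ n·(curl b) + n·(∇λ × b) = 0`. As `n × b = t`, the last term is `-t·∇λ`, and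
dividing by `λ` gives `∂ₛ ln λ = n·(curl b) + (α / λ) Ωₙ`.
-/

noncomputable section

/-- Three-dimensional Euclidean space. -/
abbrev E3 : Type := EuclideanSpace ℝ (Fin 3)

/-- The Euclidean dot product on ℝ³. -/
def dot (u v : E3) : ℝ := ∑ i, u i * v i

/-- The cross product on ℝ³. -/
def cross (u v : E3) : E3 :=
  (WithLp.equiv 2 (Fin 3 → ℝ)).symm
    ![u 1 * v 2 - u 2 * v 1, u 2 * v 0 - u 0 * v 2, u 0 * v 1 - u 1 * v 0]

/-- Partial derivative of a scalar function in the `i`-th coordinate direction. -/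
def pd (i : Fin 3) (f : E3 → ℝ) (x : E3) : ℝ :=
  fderiv ℝ f x (EuclideanSpace.single i 1)

/-- The gradient ∇f of a scalar function. -/
def grad (f : E3 → ℝ) (x : E3) : E3 :=
  (WithLp.equiv 2 (Fin 3 → ℝ)).symm ![pd 0 f x, pd 1 f x, pd 2 f x]

/-- The curl ∇×F of a vector field. -/
def curl (F : E3 → E3) (x : E3) : E3 :=
  (WithLp.equiv 2 (Fin 3 → ℝ)).symm
    ![pd 1 (fun y => F y 2) x - pd 2 (fun y => F y 1) x,
      pd 2 (fun y => F y 0) x - pd 0 (fun y => F y 2) x,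
      pd 0 (fun y => F y 1) x - pd 1 (fun y => F y 0) x]

/-- Directional derivative ∂ₛ f = t·∇f of a scalar function along a vector field t. -/
def ds (t : E3 → E3) (f : E3 → ℝ) (x : E3) : ℝ := dot (t x) (grad f x)

/-- Componentwise directional derivative (u·∇)w of a vector field w along u. -/
def dirDeriv (u w : E3 → E3) (x : E3) : E3 :=
  (WithLp.equiv 2 (Fin 3 → ℝ)).symm
    ![fderiv ℝ (fun y => w y 0) x (u x),
      fderiv ℝ (fun y => w y 1) x (u x),
      fderiv ℝ (fun y => w y 2) x (u x)]

/-- Helicity density w·(curl w) of a vector field. -/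
def hel (w : E3 → E3) (x : E3) : ℝ := dot (w x) (curl w x)

/-- Cross-helicity sum n·(curl b) + b·(curl n). -/
def crossHel (n b : E3 → E3) (x : E3) : ℝ :=
  dot (n x) (curl b x) + dot (b x) (curl n x)

/-- A smooth right-handed orthonormal (Serret–Frenet type) frame on U. -/
def IsFrameOn (t n b : E3 → E3) (U : Set E3) : Prop :=
  ContDiffOn ℝ (⊤ : ℕ∞) t U ∧ ContDiffOn ℝ (⊤ : ℕ∞) n U ∧ ContDiffOn ℝ (⊤ : ℕ∞) b U ∧
  ∀ x ∈ U, ‖t x‖ = 1 ∧ ‖n x‖ = 1 ∧ ‖b x‖ = 1 ∧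
    dot (t x) (n x) = 0 ∧ dot (t x) (b x) = 0 ∧ dot (n x) (b x) = 0 ∧
    b x = cross (t x) (n x)

namespace E3

open Filter Matrix Topology WithLp

theorem dot_eq_inner (u v : E3) : dot u v = inner ℝ u v := by
  simp only [dot, PiLp.inner_apply, RCLike.inner_apply, conj_trivial, mul_comm]

theorem dot_eq_dotProduct (u v : E3) : dot u v = ofLp u ⬝ᵥ ofLp v := rfl

theorem cross_eq_crossProduct (u v : E3) : cross u v = toLp 2 (ofLp u ⨯₃ ofLp v) := rfl

theorem dot_comm (u v : E3) : dot u v = dot v u := by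
  simp only [dot_eq_dotProduct, dotProduct_comm]

theorem dot_add (u v w : E3) : dot u (v + w) = dot u v + dot u w := by
  simp only [dot_eq_inner, inner_add_right]

theorem dot_smul (c : ℝ) (u v : E3) : dot u (c • v) = c * dot u v := by
  simp only [dot_eq_inner, real_inner_smul_right]

theorem dot_self_eq_norm_sq (u : E3) : dot u u = ‖u‖ ^ 2 := by
  rw [dot_eq_inner, real_inner_self_eq_norm_sq]

theorem smul_cross (c : ℝ) (u v : E3) : cross (c • u) v = c • cross u v := by
  simp only [cross_eq_crossProduct, ofLp_smul, map_smul, LinearMap.smul_apply, toLp_smul]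

theorem cross_swap (u v : E3) : cross u v = -cross v u := by
  simp only [cross_eq_crossProduct, ← toLp_neg, cross_anticomm]

theorem dot_self_cross (u v : E3) : dot u (cross u v) = 0 :=
  _root_.dot_self_cross (ofLp u) (ofLp v)

theorem dot_cross_self (u v : E3) : dot v (cross u v) = 0 :=
  _root_.dot_cross_self (ofLp u) (ofLp v)

theorem dot_cross_rotate (u v w : E3) : dot u (cross v w) = dot v (cross w u) :=
  triple_product_permutation (ofLp u) (ofLp v) (ofLp w)

theorem cross_cross_eq_smul_sub_smul (u v w : E3) :
    cross (cross u v) w = dot u w • v - dot v w • u :=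
  congrArg (toLp 2) (_root_.cross_cross_eq_smul_sub_smul (ofLp u) (ofLp v) (ofLp w))

theorem eq_dot_smul_add_cross_cross {n : E3} (hn : ‖n‖ = 1) (g : E3) :
    g = dot n g • n + cross (cross n g) n := by
  rw [cross_cross_eq_smul_sub_smul, dot_self_eq_norm_sq, hn, dot_comm g n]
  module

theorem cross_cross_self_of_dot_eq_zero {n t : E3} (hn : ‖n‖ = 1) (h : dot n t = 0) :
    cross n (cross t n) = t := by
  rw [cross_swap, cross_cross_eq_smul_sub_smul, dot_self_eq_norm_sq, hn, dot_comm t n, h]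
  module

section Calculus

theorem differentiableAt_fderiv {𝕜 V W : Type*} [NontriviallyNormedField 𝕜]
    [NormedAddCommGroup V] [NormedSpace 𝕜 V] [NormedAddCommGroup W] [NormedSpace 𝕜 W]
    {f : V → W} {x : V} (hf : ContDiffAt 𝕜 2 f x) : DifferentiableAt 𝕜 (fderiv 𝕜 f) x :=
  (hf.fderiv_right (m := 1) one_add_one_eq_two.le).differentiableAt one_ne_zero

variable {f g : E3 → ℝ} {F G : E3 → E3} {x : E3}

theorem pd_add (hf : DifferentiableAt ℝ f x) (hg : DifferentiableAt ℝ g x) (i : Fin 3) :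
    pd i (fun y => f y + g y) x = pd i f x + pd i g x := by
  simp only [pd, fderiv_fun_add hf hg, _root_.add_apply]

theorem pd_mul (hf : DifferentiableAt ℝ f x) (hg : DifferentiableAt ℝ g x) (i : Fin 3) :
    pd i (fun y => f y * g y) x = f x * pd i g x + pd i f x * g x := by
  simp only [pd, fderiv_fun_mul hf hg, _root_.add_apply, _root_.smul_apply,
    smul_eq_mul, mul_comm (g x)]

theorem grad_apply (f : E3 → ℝ) (x : E3) (i : Fin 3) : grad f x i = pd i f x := by
  fin_cases i <;> rfl

theorem grad_log (hf : DifferentiableAt ℝ f x) (hx : f x ≠ 0) :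
    grad (fun y => Real.log (f y)) x = (f x)⁻¹ • grad f x := by
  ext i
  simp only [grad_apply, pd, fderiv.log hf hx, PiLp.smul_apply, _root_.smul_apply]

theorem differentiableAt_dot (hF : DifferentiableAt ℝ F x) (hG : DifferentiableAt ℝ G x) :
    DifferentiableAt ℝ (fun y => dot (F y) (G y)) x := by
  simp only [dot_eq_inner]
  exact hF.inner ℝ hG

theorem differentiableAt_cross (hF : DifferentiableAt ℝ F x) (hG : DifferentiableAt ℝ G x) :
    DifferentiableAt ℝ (fun y => cross (F y) (G y)) x := by
  rw [differentiableAt_euclidean] at hF hG ⊢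
  intro i
  fin_cases i
  exacts [((hF 1).mul (hG 2)).sub ((hF 2).mul (hG 1)),
    ((hF 2).mul (hG 0)).sub ((hF 0).mul (hG 2)),
    ((hF 0).mul (hG 1)).sub ((hF 1).mul (hG 0))]

theorem differentiableAt_grad (hf : ContDiffAt ℝ 2 f x) : DifferentiableAt ℝ (grad f) x := by
  rw [differentiableAt_euclidean]
  intro i
  simp only [grad_apply, pd]
  exact (differentiableAt_fderiv hf).clm_apply (differentiableAt_const _)

theorem pd_comm (hf : ContDiffAt ℝ 2 f x) (i j : Fin 3) :
    pd i (pd j f) x = pd j (pd i f) x := by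
  have pd_pd (i j : Fin 3) : pd i (pd j f) x =
      fderiv ℝ (fderiv ℝ f) x (EuclideanSpace.single i 1) (EuclideanSpace.single j 1) := by
    unfold pd
    rw [fderiv_clm_apply (differentiableAt_fderiv hf) (differentiableAt_const _)]
    simp
  rw [pd_pd, pd_pd]
  exact hf.isSymmSndFDerivAt (by simp) _ _

theorem curl_grad (hf : ContDiffAt ℝ 2 f x) : curl (grad f) x = 0 := by
  ext i
  fin_cases i <;> exact sub_eq_zero_of_eq (pd_comm hf _ _)

theorem curl_eq_of_eventuallyEq (h : F =ᶠ[𝓝 x] G) : curl F x = curl G x := by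
  have pd_congr (i j : Fin 3) : pd i (fun y => F y j) x = pd i (fun y => G y j) x := by
    have hj : (fun y => F y j) =ᶠ[𝓝 x] fun y => G y j := h.fun_comp fun w => w j
    rw [pd, hj.fderiv_eq, pd]
  simp only [curl, pd_congr]

theorem curl_add (hF : DifferentiableAt ℝ F x) (hG : DifferentiableAt ℝ G x) :
    curl (fun y => F y + G y) x = curl F x + curl G x := by
  rw [differentiableAt_euclidean] at hF hG
  ext i
  fin_cases i <;>
    simp only [curl, PiLp.add_apply, pd_add (hF _) (hG _), WithLp.equiv_symm_apply, Fin.zero_eta,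
      Fin.mk_one, Fin.reduceFinMk, Matrix.cons_val] <;> ring

theorem curl_smul (hf : DifferentiableAt ℝ f x) (hF : DifferentiableAt ℝ F x) :
    curl (fun y => f y • F y) x = f x • curl F x + cross (grad f x) (F x) := by
  rw [differentiableAt_euclidean] at hF
  ext i
  fin_cases i <;>
    simp only [curl, cross, grad_apply, PiLp.add_apply, PiLp.smul_apply, smul_eq_mul,
      pd_mul hf (hF _), WithLp.equiv_symm_apply, Fin.zero_eta, Fin.mk_one, Fin.reduceFinMk,
      Matrix.cons_val] <;> ring

theorem dot_curl_smul_self (hf : DifferentiableAt ℝ f x) (hF : DifferentiableAt ℝ F x) :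
    dot (F x) (curl (fun y => f y • F y) x) = f x * hel F x := by
  rw [curl_smul hf hF, dot_add, dot_smul, dot_cross_self, add_zero, hel]

theorem dot_cross_grad_of_grad_eq {H α β : E3 → ℝ} {n b : E3 → E3} (hH : ContDiffAt ℝ 2 H x)
    (hα : DifferentiableAt ℝ α x) (hn : DifferentiableAt ℝ n x)
    (hβ : DifferentiableAt ℝ β x) (hb : DifferentiableAt ℝ b x)
    (h : grad H =ᶠ[𝓝 x] fun y => α y • n y + β y • b y) :
    dot (cross (n x) (b x)) (grad β x) = β x * dot (n x) (curl b x) + α x * hel n x := by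
  have hcurl : dot (n x) (curl (grad H) x) = 0 := by
    rw [curl_grad hH, dot_eq_inner, inner_zero_right]
  rw [curl_eq_of_eventuallyEq h, curl_add (hα.fun_smul hn) (hβ.fun_smul hb), dot_add,
    dot_curl_smul_self hα hn, curl_smul hβ hb, dot_add, dot_smul] at hcurl
  have htriple : dot (n x) (cross (grad β x) (b x)) = -dot (cross (n x) (b x)) (grad β x) := by
    rw [dot_cross_rotate, cross_swap, dot_comm, dot_eq_inner, dot_eq_inner, inner_neg_left]
  linarith

end Calculus

end E3

open E3 in
theorem normal_hamiltonian_log_norm_general {U : Set E3} (hU : IsOpen U) {t n b v : E3 → E3}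
    {H : E3 → ℝ} (hn : DifferentiableOn ℝ n U) (hn1 : ∀ x ∈ U, ‖n x‖ = 1)
    (hH : ContDiffOn ℝ 2 H U) (hv0 : ∀ x ∈ U, v x ≠ 0)
    (hham : ∀ x ∈ U, v x = cross (n x) (grad H x))
    (ht : ∀ x ∈ U, t x = ‖v x‖⁻¹ • v x) (hb : ∀ x ∈ U, b x = cross (t x) (n x)) :
    ∀ x ∈ U, ds t (fun y => Real.log ‖v y‖) x =
      dot (n x) (curl b x) + ‖v x‖⁻¹ * dot (n x) (grad H x) * hel n x := by
  intro x hx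
  have hUx : U ∈ nhds x := hU.mem_nhds hx
  have hHx : ContDiffAt ℝ 2 H x := hH.contDiffAt hUx
  have hnx : DifferentiableAt ℝ n x := hn.differentiableAt hUx
  have hgrad : DifferentiableAt ℝ (grad H) x := differentiableAt_grad hHx
  have hvx : DifferentiableAt ℝ v x := (differentiableAt_cross hnx hgrad).congr_of_eventuallyEq
    (Filter.eventuallyEq_of_mem hUx hham)
  have hnorm : DifferentiableAt ℝ (fun y => ‖v y‖) x := hvx.norm ℝ (hv0 x hx)
  have hnorm0 : ‖v x‖ ≠ 0 := norm_ne_zero_iff.2 (hv0 x hx)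
  have htx : DifferentiableAt ℝ t x := ((hnorm.inv hnorm0).smul hvx).congr_of_eventuallyEq
    (Filter.eventuallyEq_of_mem hUx ht)
  have hbx : DifferentiableAt ℝ b x := (differentiableAt_cross htx hnx).congr_of_eventuallyEq
    (Filter.eventuallyEq_of_mem hUx hb)
  have hdecomp : ∀ y ∈ U, grad H y = dot (n y) (grad H y) • n y + ‖v y‖ • b y := by
    intro y hy
    rw [hb y hy, ht y hy, smul_cross, smul_inv_smul₀ (norm_ne_zero_iff.2 (hv0 y hy)), hham y hy]
    exact eq_dot_smul_add_cross_cross (hn1 y hy) (grad H y)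
  have hframe : cross (n x) (b x) = t x := by
    rw [hb x hx]
    refine cross_cross_self_of_dot_eq_zero (hn1 x hx) ?_
    rw [ht x hx, dot_smul, hham x hx, dot_self_cross, mul_zero]
  have hds := dot_cross_grad_of_grad_eq hHx (differentiableAt_dot hnx hgrad) hnx hnorm hbx
    (Filter.eventuallyEq_of_mem hUx hdecomp)
  rw [hframe] at hds
  rw [ds, grad_log hnorm hnorm0, dot_smul, hds]
  field_simp

/-- if Ωₙ = 0 and v = n × ∇H with t = v/‖v‖, then
∂ₛ ln‖v‖ = n·(curl b). -/
theorem normal_hamiltonian_log_norm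
    (U : Set E3) (hU : IsOpen U) (t n b : E3 → E3)
    (hframe : IsFrameOn t n b U)
    (hΩn : ∀ x ∈ U, hel n x = 0)
    (H : E3 → ℝ) (hH : ContDiffOn ℝ (⊤ : ℕ∞) H U)
    (v : E3 → E3) (hv : ContDiffOn ℝ (⊤ : ℕ∞) v U) (hv0 : ∀ x ∈ U, v x ≠ 0)
    (hham : ∀ x ∈ U, v x = cross (n x) (grad H x))
    (ht : ∀ x ∈ U, t x = ‖v x‖⁻¹ • v x) :
    ∀ x ∈ U, ds t (fun y => Real.log ‖v y‖) x = dot (n x) (curl b x) := by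
  obtain ⟨-, hn, -, horth⟩ := hframe
  intro x hx
  rw [normal_hamiltonian_log_norm_general hU (hn.differentiableOn (by simp))
    (fun y hy => (horth y hy).2.1) (hH.of_le (by norm_cast)) hv0 hham ht
    (fun y hy => (horth y hy).2.2.2.2.2.2) x hx, hΩn x hx, mul_zero, add_zero]
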